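/- For SNR > 0 and γ ∈ ℝ define R_lin(SNR, γ) := sup over primes p ∈ P'(γ) of min{ −(1/2)·log₂( 1/p² + √(2π/(3·SNR)) + (1/p)·exp(−(3·SNR/(2p²))·δ(p,γ)²) + 2·exp(−3·SNR/8) ), −log₂( 1/p + √(2π/(3·δ(p,γ)²·SNR)) + 2·exp(−3·SNR/8) ) }. Then for Lebesgue-almost every γ ∈ ℝ, liminf_{SNR → ∞} R_lin(SNR, γ) / ( (1/4)·log₂ SNR ) ≥ 1. -/

import Mathlib

open MeasureTheory ProbabilityTheory Real Filter
open scoped ENNReal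

noncomputable section

/-- Reduction of `x` modulo the half-open interval `[a, b)`. -/
def modIco (a b x : ℝ) : ℝ := a + (b - a) * Int.fract ((x - a) / (b - a))

/-- `L = √12`. -/
def Lc : ℝ := Real.sqrt 12

/-- `x*`: reduction of `x` modulo the basic interval `I = [-L/2, L/2)`. -/
def starI (x : ℝ) : ℝ := modIco (-(Lc / 2)) (Lc / 2) x

/-- `δ(p, γ) = min_{l ∈ {1,…,p−1}} |l·γ − ⌊l·γ⌉|`. -/
def deltaP (p : ℕ) (γ : ℝ) : ℝ :=
  sInf {d : ℝ | ∃ l : ℕ, 1 ≤ l ∧ l ≤ p - 1 ∧ d = |(l : ℝ) * γ - round ((l : ℝ) * γ)|}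

/-- The set `P'(γ)` of admissible primes (depends on the SNR). -/
def Pgood (SNR : ℝ) (γ : ℝ) : Set ℕ :=
  {p | p.Prime ∧
    Real.exp (-(3 * SNR / (2 * (p : ℝ) ^ 2)) * (modIco (-(1/4)) (1/4) γ) ^ 2) <
      1 - 2 * (p : ℝ) * Real.exp (-(3 * SNR / 8))}

/-- First rate expression in the achievable-rate theorem. -/
def rateA (SNR : ℝ) (p : ℕ) (γ : ℝ) : ℝ :=
  -(1/2) * Real.logb 2 (1/(p : ℝ)^2 + Real.sqrt (2 * π / (3 * SNR))
    + (1/(p : ℝ)) * Real.exp (-(3 * SNR / (2 * (p : ℝ)^2)) * (deltaP p γ)^2)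
    + 2 * Real.exp (-(3 * SNR / 8)))

/-- Second rate expression in the achievable-rate theorem. -/
def rateB (SNR : ℝ) (p : ℕ) (γ : ℝ) : ℝ :=
  -Real.logb 2 (1/(p : ℝ) + Real.sqrt (2 * π / (3 * (deltaP p γ)^2 * SNR))
    + 2 * Real.exp (-(3 * SNR / 8)))

/-- The `k`-th point of the constellation `Λ_p`. -/
def constPt (p : ℕ) (k : ℕ) : ℝ := starI (Lc / (p : ℝ) * (k : ℝ))

/-- The constellation `Λ_p` as a finite set of reals. -/
def constSet (p : ℕ) : Finset ℝ := (Finset.range p).image (constPt p)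

/-- The uniform probability measure on the constellation `Λ_p`. -/
def uniformConst (p : ℕ) : Measure ℝ :=
  (p : ℝ≥0∞)⁻¹ • ∑ k ∈ Finset.range p, Measure.dirac (constPt p k)

/-- The maximal symmetric rate `R_lin(SNR, γ)` achieved by the linear-code scheme. -/
def Rlin (SNR γ : ℝ) : ℝ :=
  sSup {x : ℝ | ∃ p ∈ Pgood SNR γ, x = min (rateA SNR p γ) (rateB SNR p γ)}

/-!
Almost every `γ` is Diophantine of every exponent `τ > 1`, that is `δ(p, γ) ≥ c p^(-τ)`. By
Bertrand's postulate there is a prime `p` of size `SNR^θ` for any `θ < 1/4`. If `2θ(1 + τ) < 1`,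
then `(SNR / p²) δ(p, γ)²` grows like a positive power of `SNR`, so every exponential term is
negligible, `p` is admissible, and both rates are `log₂ p - O(1)`. Letting `θ → 1/4` (and `τ → 1`)
gives the lower bound; the term `√(2π / (3 SNR))` in the first rate shows that it is optimal.
-/

section Diophantine

variable {τ γ : ℝ}

/-- `γ` is Diophantine of exponent `τ`: the distance from `n γ` to the nearest integer is at least a
constant multiple of `n ^ (-τ)`. This is the quantitative irrationality on which the lower bounds
for `deltaP` rest; rational numbers satisfy it for no `τ`. -/
def IsDiophantine (τ γ : ℝ) : Prop :=
  ∃ c > 0, ∀ n : ℕ, n ≠ 0 → c * (n : ℝ) ^ (-τ) ≤ |n * γ - round (n * γ)|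

lemma isDiophantine_of_not_liouvilleWith (hγ : Irrational γ) (h : ¬ LiouvilleWith (τ + 1) γ) :
    IsDiophantine τ γ := by
  have dist_pos (n : ℕ) (hn : n ≠ 0) : 0 < |n * γ - round (n * γ)| :=
    abs_pos.2 (sub_ne_zero.2 ((hγ.natCast_mul hn).ne_int _))
  have eventually_le : ∀ᶠ n : ℕ in atTop, (n : ℝ) ^ (-τ) / |n * γ - round (n * γ)| ≤ 1 := by
    simp only [LiouvilleWith, not_exists, not_frequently] at h
    filter_upwards [h 1, eventually_gt_atTop 0] with n hn hn0
    have hn0' : (0 : ℝ) < n := Nat.cast_pos.2 hn0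
    have hle : 1 / (n : ℝ) ^ (τ + 1) ≤ |γ - round (n * γ) / n| :=
      not_lt.1 fun hlt ↦ hn _ ⟨mod_cast hγ.ne_rational _ n, hlt⟩
    rw [div_le_one (dist_pos n hn0.ne')]
    calc (n : ℝ) ^ (-τ) = n * (1 / (n : ℝ) ^ (τ + 1)) := by
          rw [rpow_add_one hn0'.ne', rpow_neg hn0'.le]; field_simp
      _ ≤ n * |γ - round (n * γ) / n| := by gcongr
      _ = |n * γ - round (n * γ)| := by
          rw [← abs_of_pos hn0', ← abs_mul, abs_of_pos hn0', mul_sub, mul_div_cancel₀ _ hn0'.ne']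
  obtain ⟨B, hB⟩ := (isBoundedUnder_of_eventually_le eventually_le).bddAbove_range
  have ratio_le (n : ℕ) : (n : ℝ) ^ (-τ) / |n * γ - round (n * γ)| ≤ B := hB ⟨n, rfl⟩
  have hB0 : 0 < B := lt_of_lt_of_le
    (div_pos (rpow_pos_of_pos (by simp) _) (dist_pos 1 one_ne_zero)) (ratio_le 1)
  refine ⟨B⁻¹, inv_pos.2 hB0, fun n hn ↦ ?_⟩
  rw [inv_mul_le_iff₀ hB0]
  exact (div_le_iff₀ (dist_pos n hn)).1 (ratio_le n)

lemma ae_forall_isDiophantine : ∀ᵐ γ : ℝ, ∀ τ > 1, IsDiophantine τ γ := by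
  filter_upwards [(Set.countable_range ((↑) : ℚ → ℝ)).ae_notMem volume, ae_not_liouvilleWith]
    with γ hγ hL τ hτ
  exact isDiophantine_of_not_liouvilleWith hγ (hL _ (by linarith))

lemma IsDiophantine.irrational (h : IsDiophantine τ γ) : Irrational γ := by
  rintro ⟨q, rfl⟩
  obtain ⟨c, hc, hq⟩ := h
  have hden : (q.den : ℝ) * q = q.num := mod_cast q.den_mul_eq_num
  have hle := hq q.den q.den_ne_zero
  rw [hden, round_intCast, sub_self, abs_zero] at hle
  have : (0 : ℝ) < q.den := Nat.cast_pos.2 q.den_pos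
  have : 0 < c * (q.den : ℝ) ^ (-τ) := by positivity
  linarith

lemma IsDiophantine.exists_mul_rpow_le_deltaP (h : IsDiophantine τ γ) (hτ : 0 ≤ τ) :
    ∃ c > 0, ∀ p : ℕ, 2 ≤ p → c * (p : ℝ) ^ (-τ) ≤ deltaP p γ := by
  obtain ⟨c, hc, hn⟩ := h
  refine ⟨c, hc, fun p hp ↦ le_csInf ⟨_, 1, le_rfl, by omega, rfl⟩ ?_⟩
  rintro _ ⟨l, hl, hlp, rfl⟩
  have hl0 : (0 : ℝ) < l := mod_cast hl
  have hlp' : (l : ℝ) ≤ p := mod_cast hlp.trans (Nat.sub_le p 1)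
  calc c * (p : ℝ) ^ (-τ) ≤ c * (l : ℝ) ^ (-τ) :=
        mul_le_mul_of_nonneg_left (rpow_le_rpow_of_nonpos hl0 hlp' (neg_nonpos.2 hτ)) hc.le
    _ ≤ |l * γ - round (l * γ)| := hn l (by omega)

lemma irrational_modIco (hγ : Irrational γ) {a b : ℚ} (hab : a ≠ b) :
    Irrational (modIco a b γ) := by
  have hba : (b - a : ℝ) ≠ 0 := sub_ne_zero.2 (mod_cast hab.symm)
  have h : modIco a b γ = γ - ((b - a) * ⌊(γ - a) / (b - a : ℝ)⌋ : ℚ) := by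
    rw [modIco, Int.fract, mul_sub, mul_div_cancel₀ _ hba]
    push_cast
    ring
  exact h ▸ hγ.sub_ratCast _

end Diophantine

lemma eventually_log_le_mul_rpow {c κ : ℝ} (hc : 0 < c) (hκ : 0 < κ) :
    ∀ᶠ S : ℝ in atTop, log S ≤ c * S ^ κ := by
  filter_upwards [(isLittleO_log_rpow_atTop hκ).bound hc, eventually_ge_atTop 0] with S h hS
  rw [norm_of_nonneg (rpow_nonneg hS κ)] at h
  exact (le_norm_self _).trans h

lemma exp_neg_le_inv_of_log_le {S T : ℝ} (hS : 0 < S) (h : log S ≤ T) : exp (-T) ≤ S⁻¹ := by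
  rw [exp_neg]
  exact inv_anti₀ hS ((log_le_iff_le_exp hS).1 h)

lemma eventually_exp_neg_le_inv_sq :
    ∀ᶠ S : ℝ in atTop, exp (-(3 * S / 8)) ≤ (S ^ 2)⁻¹ := by
  filter_upwards [eventually_log_le_mul_rpow (c := 3 / 16) (by norm_num) one_pos,
    eventually_gt_atTop 0] with S hlog hS
  refine exp_neg_le_inv_of_log_le (by positivity) ?_
  rw [rpow_one] at hlog
  rw [log_pow]
  push_cast
  linarith

lemma eventually_log_le_exponent {c τ θ : ℝ} (hc : 0 < c) (hτ : 0 ≤ 1 + τ)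
    (hθ : 2 * θ * (1 + τ) < 1) :
    ∀ᶠ S : ℝ in atTop, ∀ p t : ℝ, 0 < p → p ≤ S ^ θ → c * p ^ (-τ) ≤ t →
      log S ≤ 3 * S / (2 * p ^ 2) * t ^ 2 := by
  filter_upwards [eventually_log_le_mul_rpow (c := 3 / 2 * c ^ 2) (by positivity)
    (sub_pos.2 hθ), eventually_gt_atTop 0] with S hlog hS p t hp hpS ht
  have rpow_le : S ^ (-(2 * θ * (1 + τ))) ≤ p ^ (-(2 * (1 + τ))) := by
    calc S ^ (-(2 * θ * (1 + τ))) = (S ^ θ) ^ (-(2 * (1 + τ))) := by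
          rw [← rpow_mul hS.le]; ring_nf
      _ ≤ p ^ (-(2 * (1 + τ))) := rpow_le_rpow_of_nonpos hp hpS (by linarith)
  calc log S ≤ 3 / 2 * c ^ 2 * S ^ (1 - 2 * θ * (1 + τ)) := hlog
    _ = 3 / 2 * c ^ 2 * (S * S ^ (-(2 * θ * (1 + τ)))) := by
        rw [sub_eq_add_neg, rpow_add hS, rpow_one]
    _ ≤ 3 / 2 * c ^ 2 * (S * p ^ (-(2 * (1 + τ)))) := by gcongr
    _ = 3 * S / (2 * p ^ 2) * (c * p ^ (-τ)) ^ 2 := by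
        rw [show -(2 * (1 + τ)) = -τ + -τ - (2 : ℕ) by push_cast; ring, rpow_sub_natCast hp.ne',
          rpow_add hp]
        field_simp
    _ ≤ 3 * S / (2 * p ^ 2) * t ^ 2 := by gcongr

lemma exists_prime_half_le_le {x : ℝ} (hx : 2 ≤ x) : ∃ p : ℕ, p.Prime ∧ x / 2 ≤ p ∧ p ≤ x := by
  have hfloor : ⌊x / 2⌋₊ ≠ 0 := (Nat.floor_pos.2 (by linarith)).ne'
  obtain ⟨p, hp, hlt, hle⟩ := Nat.exists_prime_lt_and_le_two_mul _ hfloor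
  refine ⟨p, hp, (Nat.lt_of_floor_lt hlt).le, ?_⟩
  calc (p : ℝ) ≤ 2 * ⌊x / 2⌋₊ := mod_cast hle
    _ ≤ 2 * (x / 2) := by gcongr; exact Nat.floor_le (by linarith)
    _ = x := by ring

open scoped Topology in
lemma tendsto_div_one_of_forall_mul_sub_le {α : Type*} {l : Filter α} {f g : α → ℝ}
    (hg : Tendsto g l atTop) (hfg : ∀ᶠ x in l, f x ≤ g x)
    (hgf : ∀ b, 0 < b → b < 1 → ∃ C, ∀ᶠ x in l, b * g x - C ≤ f x) :
    Tendsto (fun x ↦ f x / g x) l (𝓝 1) := by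
  refine tendsto_order.2 ⟨fun a ha ↦ ?_, fun a ha ↦ ?_⟩
  · obtain ⟨b, hab, hb1⟩ := exists_between (max_lt ha one_pos)
    obtain ⟨hab, hb0⟩ := max_lt_iff.1 hab
    obtain ⟨C, hC⟩ := hgf b hb0 hb1
    filter_upwards [hC, hg.eventually_gt_atTop (C / (b - a)), hg.eventually_gt_atTop 0]
      with x hx hCx hgx
    rw [div_lt_iff₀ (sub_pos.2 hab)] at hCx
    rw [lt_div_iff₀ hgx]
    linarith
  · filter_upwards [hfg, hg.eventually_gt_atTop 0] with x hx hgx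
    exact ((div_le_one hgx).2 hx).trans_lt ha

lemma logb_two_four_div {x : ℝ} (hx : x ≠ 0) : logb 2 (4 / x) = 2 - logb 2 x := by
  rw [logb_div four_ne_zero hx, show (4 : ℝ) = 2 ^ (2 : ℝ) by norm_num,
    logb_rpow two_pos one_lt_two.ne']

section Rates

variable {S γ : ℝ} {p : ℕ}

lemma rateA_le (hS : 0 < S) (p : ℕ) (γ : ℝ) : rateA S p γ ≤ 1 / 4 * logb 2 S := by
  have sqrt_inv_le : √(S⁻¹) ≤ √(2 * π / (3 * S)) := by
    refine sqrt_le_sqrt ?_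
    rw [inv_eq_one_div, div_le_div_iff₀ hS (by positivity)]
    nlinarith [pi_gt_three]
  have logb_le : logb 2 √(S⁻¹) ≤ logb 2 (1 / (p : ℝ) ^ 2 + √(2 * π / (3 * S))
      + 1 / (p : ℝ) * exp (-(3 * S / (2 * (p : ℝ) ^ 2)) * deltaP p γ ^ 2)
      + 2 * exp (-(3 * S / 8))) := by
    refine logb_le_logb_of_le one_lt_two (by positivity) (sqrt_inv_le.trans ?_)
    rw [add_assoc, add_right_comm]
    exact le_add_of_nonneg_left (by positivity)
  have logb_sqrt_inv : logb 2 √(S⁻¹) = -(1 / 2) * logb 2 S := by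
    rw [sqrt_eq_rpow, logb_rpow_eq_mul_logb_of_pos (by positivity), logb_inv]
    ring
  rw [rateA]
  linarith

lemma bddAbove_rates (hS : 0 < S) (γ : ℝ) :
    BddAbove {x : ℝ | ∃ p ∈ Pgood S γ, x = min (rateA S p γ) (rateB S p γ)} := by
  refine ⟨1 / 4 * logb 2 S, ?_⟩
  rintro _ ⟨p, -, rfl⟩
  exact (min_le_left _ _).trans (rateA_le hS p γ)

lemma Rlin_le (hS : 1 ≤ S) (γ : ℝ) : Rlin S γ ≤ 1 / 4 * logb 2 S := by
  refine Real.sSup_le ?_ (mul_nonneg (by norm_num) (logb_nonneg one_lt_two hS))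
  rintro _ ⟨p, -, rfl⟩
  exact (min_le_left _ _).trans (rateA_le (by linarith) p γ)

lemma logb_sub_two_le_rateA (hp : 0 < p) (hpS : (p : ℝ) ^ 4 ≤ S)
    (hδ : exp (-(3 * S / (2 * (p : ℝ) ^ 2)) * deltaP p γ ^ 2) ≤ (p : ℝ)⁻¹)
    (hS : exp (-(3 * S / 8)) ≤ ((p : ℝ) ^ 2)⁻¹) :
    logb 2 p - 2 ≤ rateA S p γ := by
  have hp0 : (0 : ℝ) < p := Nat.cast_pos.2 hp
  have hS0 : 0 < S := (pow_pos hp0 4).trans_le hpS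
  have sqrt_le : √(2 * π / (3 * S)) ≤ 2 * ((p : ℝ) ^ 2)⁻¹ := by
    refine sqrt_le_iff.2 ⟨by positivity, ?_⟩
    calc 2 * π / (3 * S) ≤ 2 * 4 / (3 * (p : ℝ) ^ 4) := by gcongr; exact pi_lt_four.le
      _ ≤ 4 / (p : ℝ) ^ 4 := by
        rw [div_le_div_iff₀ (by positivity) (by positivity)]
        linarith [pow_pos hp0 4]
      _ = (2 * ((p : ℝ) ^ 2)⁻¹) ^ 2 := by ring
  have interference_le : 1 / (p : ℝ) * exp (-(3 * S / (2 * (p : ℝ) ^ 2)) * deltaP p γ ^ 2)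
      ≤ ((p : ℝ) ^ 2)⁻¹ := by
    calc _ ≤ 1 / (p : ℝ) * (p : ℝ)⁻¹ := by gcongr
      _ = ((p : ℝ) ^ 2)⁻¹ := by ring
  have sum_le : 1 / (p : ℝ) ^ 2 + √(2 * π / (3 * S))
      + 1 / (p : ℝ) * exp (-(3 * S / (2 * (p : ℝ) ^ 2)) * deltaP p γ ^ 2)
      + 2 * exp (-(3 * S / 8)) ≤ (4 / p) ^ 2 := by
    rw [show (4 / (p : ℝ)) ^ 2 = 16 * ((p : ℝ) ^ 2)⁻¹ by ring, one_div]
    linarith [inv_pos.2 (pow_pos hp0 2)]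
  have logb_le := logb_le_logb_of_le one_lt_two (by positivity) sum_le
  rw [logb_pow, logb_two_four_div hp0.ne'] at logb_le
  rw [rateA]
  push_cast at logb_le
  linarith

lemma logb_sub_two_le_rateB (hp : 0 < p) (hS0 : 0 < S)
    (hδ : π ≤ 3 * S / (2 * (p : ℝ) ^ 2) * deltaP p γ ^ 2)
    (hS : exp (-(3 * S / 8)) ≤ (p : ℝ)⁻¹) :
    logb 2 p - 2 ≤ rateB S p γ := by
  have hp0 : (0 : ℝ) < p := Nat.cast_pos.2 hp
  have sqrt_le : √(2 * π / (3 * deltaP p γ ^ 2 * S)) ≤ (p : ℝ)⁻¹ := by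
    refine sqrt_le_iff.2 ⟨by positivity, ?_⟩
    refine div_le_of_le_mul₀ (by positivity) (by positivity) ?_
    calc 2 * π ≤ 2 * (3 * S / (2 * (p : ℝ) ^ 2) * deltaP p γ ^ 2) := by gcongr
      _ = (p : ℝ)⁻¹ ^ 2 * (3 * deltaP p γ ^ 2 * S) := by ring
  have sum_le : 1 / (p : ℝ) + √(2 * π / (3 * deltaP p γ ^ 2 * S)) + 2 * exp (-(3 * S / 8))
      ≤ 4 / p := by
    rw [div_eq_mul_inv 4, one_div]
    linarith
  have logb_le := logb_le_logb_of_le one_lt_two (by positivity) sum_le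
  rw [logb_two_four_div hp0.ne'] at logb_le
  rw [rateB]
  linarith

lemma mem_Pgood (hp : p.Prime) (hpS : p ≤ S) (hS : 3 < S)
    (hγ : exp (-(3 * S / (2 * (p : ℝ) ^ 2)) * modIco (-(1 / 4)) (1 / 4) γ ^ 2) ≤ S⁻¹)
    (hE : exp (-(3 * S / 8)) ≤ (S ^ 2)⁻¹) : p ∈ Pgood S γ := by
  refine ⟨hp, hγ.trans_lt ?_⟩
  have correction_le : 2 * p * exp (-(3 * S / 8)) ≤ 2 * S⁻¹ := by
    calc 2 * p * exp (-(3 * S / 8)) ≤ 2 * S * (S ^ 2)⁻¹ := by gcongr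
      _ = 2 * S⁻¹ := by field_simp
  have three_mul_inv_lt : 3 * S⁻¹ < 1 := by
    rwa [← div_eq_mul_inv, div_lt_one (by linarith)]
  linarith

lemma logb_sub_two_le_Rlin (hp : p.Prime) (hpS : (p : ℝ) ^ 4 ≤ S) (hS : π ≤ log S)
    (hγ : log S ≤ 3 * S / (2 * (p : ℝ) ^ 2) * modIco (-(1 / 4)) (1 / 4) γ ^ 2)
    (hδ : log S ≤ 3 * S / (2 * (p : ℝ) ^ 2) * deltaP p γ ^ 2)
    (hE : exp (-(3 * S / 8)) ≤ (S ^ 2)⁻¹) :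
    logb 2 p - 2 ≤ Rlin S γ := by
  have hp2 : (2 : ℝ) ≤ p := mod_cast hp.two_le
  have hp1 : (1 : ℝ) ≤ p := by linarith
  have hp0 : (0 : ℝ) < p := by linarith
  have p_le : (p : ℝ) ≤ S := (le_self_pow₀ hp1 four_ne_zero).trans hpS
  have S_gt : 3 < S := by
    have : (2 : ℝ) ^ 4 ≤ p ^ 4 := by gcongr
    linarith
  have exp_δ_le := exp_neg_le_inv_of_log_le (by linarith) hδ
  have exp_γ_le := exp_neg_le_inv_of_log_le (by linarith) hγ
  rw [← neg_mul] at exp_δ_le exp_γ_le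
  have tail_le_inv_sq : exp (-(3 * S / 8)) ≤ ((p : ℝ) ^ 2)⁻¹ := hE.trans (by gcongr)
  have tail_le_inv : exp (-(3 * S / 8)) ≤ (p : ℝ)⁻¹ :=
    tail_le_inv_sq.trans (inv_anti₀ hp0 (le_self_pow₀ hp1 two_ne_zero))
  calc logb 2 p - 2 ≤ min (rateA S p γ) (rateB S p γ) :=
        le_min (logb_sub_two_le_rateA hp.pos hpS (exp_δ_le.trans (inv_anti₀ hp0 p_le))
            tail_le_inv_sq)
          (logb_sub_two_le_rateB hp.pos (by linarith) (hS.trans hδ) tail_le_inv)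
    _ ≤ Rlin S γ := le_csSup (bddAbove_rates (by linarith) γ)
        ⟨p, mem_Pgood hp p_le S_gt exp_γ_le hE, rfl⟩

lemma IsDiophantine.eventually_mul_logb_sub_le_Rlin {τ θ : ℝ} (h : IsDiophantine τ γ)
    (hτ : 1 ≤ τ) (hθ0 : 0 < θ) (hθ : 2 * θ * (1 + τ) < 1) :
    ∀ᶠ S : ℝ in atTop, θ * logb 2 S - 3 ≤ Rlin S γ := by
  obtain ⟨c, hc, hδ⟩ := h.exists_mul_rpow_le_deltaP (by linarith)
  have hx : 0 < |modIco (-(1 / 4)) (1 / 4) γ| := by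
    have := irrational_modIco h.irrational (a := -(1 / 4)) (b := 1 / 4) (by norm_num)
    push_cast at this
    exact abs_pos.2 this.ne_zero
  filter_upwards [eventually_log_le_exponent hc (by linarith) hθ,
    eventually_log_le_exponent (τ := τ) hx (by linarith) hθ, eventually_exp_neg_le_inv_sq,
    tendsto_log_atTop.eventually_ge_atTop π, (tendsto_rpow_atTop hθ0).eventually_ge_atTop 2,
    eventually_ge_atTop 1] with S hδS hxS hE hlog hSθ hS
  obtain ⟨p, hp, le_p, p_le⟩ := exists_prime_half_le_le hSθ
  have hp1 : (1 : ℝ) ≤ p := mod_cast hp.one_le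
  have hp0 : (0 : ℝ) < p := by linarith
  have hpS : (p : ℝ) ^ 4 ≤ S := by
    calc (p : ℝ) ^ 4 ≤ (S ^ θ) ^ 4 := by gcongr
      _ = S ^ (θ * (4 : ℕ)) := (rpow_mul_natCast (by linarith) θ 4).symm
      _ ≤ S ^ (1 : ℝ) := rpow_le_rpow_of_exponent_le hS (by push_cast; nlinarith)
      _ = S := rpow_one S
  have hxp : |modIco (-(1 / 4)) (1 / 4) γ| * (p : ℝ) ^ (-τ) ≤ |modIco (-(1 / 4)) (1 / 4) γ| :=
    mul_le_of_le_one_right hx.le (rpow_le_one_of_one_le_of_nonpos hp1 (by linarith))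
  have hxlog := hxS p _ hp0 p_le hxp
  rw [sq_abs] at hxlog
  calc θ * logb 2 S - 3 = logb 2 (S ^ θ / 2) - 2 := by
        rw [logb_div (by positivity) two_ne_zero, logb_rpow_eq_mul_logb_of_pos (by linarith),
          logb_self_eq_one one_lt_two]
        ring
    _ ≤ logb 2 p - 2 := by gcongr; exact one_lt_two
    _ ≤ Rlin S γ := logb_sub_two_le_Rlin hp hpS hlog hxlog
        (hδS p _ hp0 p_le (hδ p hp.two_le)) hE

open scoped Topology in
theorem Rlin_dof_ae_general (h : ∀ τ > 1, IsDiophantine τ γ) :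
    Tendsto (fun SNR : ℝ ↦ Rlin SNR γ / (1 / 4 * logb 2 SNR)) atTop (𝓝 1) := by
  refine tendsto_div_one_of_forall_mul_sub_le
    ((tendsto_logb_atTop one_lt_two).const_mul_atTop (by norm_num)) ?_ fun b hb0 hb1 ↦ ⟨3, ?_⟩
  · filter_upwards [eventually_ge_atTop 1] with S hS using Rlin_le hS γ
  · have hτ : 1 < 1 / b := (one_lt_div hb0).2 hb1
    have hexp : 2 * (b / 4) * (1 + 1 / b) = (b + 1) / 2 := by field_simp; ring
    filter_upwards [(h _ hτ).eventually_mul_logb_sub_le_Rlin hτ.le (by positivity : 0 < b / 4)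
      (by linarith)] with S hS
    linarith

end Rates

/-- **Degrees of freedom.** For almost every `γ`, the achievable symmetric rate
`R_lin(SNR, γ)` scales like `(1/4)·log₂ SNR` as `SNR → ∞`. -/
theorem Rlin_dof_ae :
    ∀ᵐ γ : ℝ,
      1 ≤ Filter.liminf
            (fun SNR : ℝ => Rlin SNR γ / ((1/4) * Real.logb 2 SNR)) Filter.atTop := by
  filter_upwards [ae_forall_isDiophantine] with γ hγ
  exact (Rlin_dof_ae_general hγ).liminf_eq.ge
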